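/- Let U : ℝ² → ℝ be a smooth, nowhere-vanishing function of (z,τ) satisfying the RmKdV equation U_τ + (U³(U_zz − U))_z = 0, let k = 1 or k = −1, and suppose U + k·U_z is nowhere vanishing. Let y : ℝ² → ℝ be smooth with y_z = U + k·U_z and y_τ = (U⁴ − U³·U_zz) + k·(U⁴ − U³·U_zz)_z on ℝ², and let M : ℝ² → ℝ be a smooth function of (y,T) such that M(y(z,τ), τ) = U(z,τ)·(U(z,τ) + k·U_z(z,τ)) for all (z,τ). Then the RKdV equation M_T + (M³(M_yy − 1))_y = 0 holds at every point of the form (y(z,τ), τ). -/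

import Mathlib

noncomputable section

/-- Partial derivative of `f` with respect to its first argument. -/
def d1 (f : ℝ → ℝ → ℝ) : ℝ → ℝ → ℝ := fun a b => deriv (fun a' => f a' b) a

/-- Partial derivative of `f` with respect to its second argument. -/
def d2 (f : ℝ → ℝ → ℝ) : ℝ → ℝ → ℝ := fun a b => deriv (fun b' => f a b') b

/-- Smoothness of a two-variable real function. -/
def Smooth2 (f : ℝ → ℝ → ℝ) : Prop := ContDiff ℝ (⊤ : ℕ∞) (fun p : ℝ × ℝ => f p.1 p.2)


lemma Smooth2.hasFDeriv {f : ℝ → ℝ → ℝ} (hf : Smooth2 f) (p : ℝ × ℝ) :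
    HasFDerivAt (fun p : ℝ × ℝ => f p.1 p.2) (fderiv ℝ (fun p : ℝ × ℝ => f p.1 p.2) p) p :=
  ((ContDiff.differentiable hf (by simp)) p).hasFDerivAt

lemma Smooth2.comp_curve {f : ℝ → ℝ → ℝ} (hf : Smooth2 f) {g h : ℝ → ℝ} {g' h' t : ℝ}
    (hg : HasDerivAt g g' t) (hh : HasDerivAt h h' t) :
    HasDerivAt (fun s => f (g s) (h s))
      (fderiv ℝ (fun p : ℝ × ℝ => f p.1 p.2) (g t, h t) (g', h')) t :=
  HasFDerivAt.comp_hasDerivAt (f := fun s => (g s, h s)) t (hf.hasFDeriv (g t, h t)) (hg.prodMk hh)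

lemma Smooth2.d1_eq {f : ℝ → ℝ → ℝ} (hf : Smooth2 f) (a b : ℝ) :
    d1 f a b = fderiv ℝ (fun p : ℝ × ℝ => f p.1 p.2) (a, b) (1, 0) :=
  (hf.comp_curve (hasDerivAt_id a) (hasDerivAt_const a b)).deriv

lemma Smooth2.d2_eq {f : ℝ → ℝ → ℝ} (hf : Smooth2 f) (a b : ℝ) :
    d2 f a b = fderiv ℝ (fun p : ℝ × ℝ => f p.1 p.2) (a, b) (0, 1) :=
  (hf.comp_curve (hasDerivAt_const b a) (hasDerivAt_id b)).deriv

lemma Smooth2.chain {f : ℝ → ℝ → ℝ} (hf : Smooth2 f) {g h : ℝ → ℝ} {g' h' t : ℝ}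
    (hg : HasDerivAt g g' t) (hh : HasDerivAt h h' t) :
    HasDerivAt (fun s => f (g s) (h s)) (d1 f (g t) (h t) * g' + d2 f (g t) (h t) * h') t := by
  have e : ((g', h') : ℝ × ℝ) = g' • ((1 : ℝ), (0 : ℝ)) + h' • ((0 : ℝ), (1 : ℝ)) := by simp
  have := hf.comp_curve hg hh
  rw [e, map_add, map_smul, map_smul, ← hf.d1_eq, ← hf.d2_eq] at this
  convert this using 1
  simp [mul_comm]

lemma Smooth2.h1 {f : ℝ → ℝ → ℝ} (hf : Smooth2 f) (a b : ℝ) :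
    HasDerivAt (fun s => f s b) (d1 f a b) a := by
  simpa using hf.chain (hasDerivAt_id a) (hasDerivAt_const a b)

lemma Smooth2.h2 {f : ℝ → ℝ → ℝ} (hf : Smooth2 f) (a b : ℝ) :
    HasDerivAt (fun s => f a s) (d2 f a b) b := by
  simpa using hf.chain (hasDerivAt_const b a) (hasDerivAt_id b)

lemma Smooth2.fd {f : ℝ → ℝ → ℝ} (hf : Smooth2 f) :
    ContDiff ℝ (⊤ : ℕ∞) (fderiv ℝ (fun p : ℝ × ℝ => f p.1 p.2)) :=
  ContDiff.fderiv_right (m := (⊤ : ℕ∞)) hf (by simp)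

lemma Smooth2.sd1 {f : ℝ → ℝ → ℝ} (hf : Smooth2 f) : Smooth2 (d1 f) := by
  have : (fun p : ℝ × ℝ => d1 f p.1 p.2)
      = fun p => fderiv ℝ (fun p : ℝ × ℝ => f p.1 p.2) p (1, 0) := by
    funext p; exact hf.d1_eq p.1 p.2
  unfold Smooth2
  rw [this]
  exact hf.fd.clm_apply contDiff_const

lemma Smooth2.sd2 {f : ℝ → ℝ → ℝ} (hf : Smooth2 f) : Smooth2 (d2 f) := by
  have : (fun p : ℝ × ℝ => d2 f p.1 p.2)
      = fun p => fderiv ℝ (fun p : ℝ × ℝ => f p.1 p.2) p (0, 1) := by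
    funext p; exact hf.d2_eq p.1 p.2
  unfold Smooth2
  rw [this]
  exact hf.fd.clm_apply contDiff_const

lemma Smooth2.symm {f : ℝ → ℝ → ℝ} (hf : Smooth2 f) (a b : ℝ) :
    d2 (d1 f) a b = d1 (d2 f) a b := by
  have e1 : (fun p : ℝ × ℝ => d1 f p.1 p.2)
      = fun p => fderiv ℝ (fun p : ℝ × ℝ => f p.1 p.2) p (1, 0) := by
    funext p; exact hf.d1_eq p.1 p.2
  have e2 : (fun p : ℝ × ℝ => d2 f p.1 p.2)
      = fun p => fderiv ℝ (fun p : ℝ × ℝ => f p.1 p.2) p (0, 1) := by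
    funext p; exact hf.d2_eq p.1 p.2
  have hd : DifferentiableAt ℝ (fderiv ℝ (fun p : ℝ × ℝ => f p.1 p.2)) (a, b) :=
    (hf.fd.differentiable (by simp)) _
  have hs : IsSymmSndFDerivAt ℝ (fun p : ℝ × ℝ => f p.1 p.2) (a, b) :=
    ContDiffAt.isSymmSndFDerivAt (n := (⊤ : ℕ∞)) (ContDiff.contDiffAt hf)
      (by
        simp only [minSmoothness_of_isRCLikeNormedField]
        exact WithTop.coe_le_coe.2 (le_top : (2 : ℕ∞) ≤ ⊤))
  rw [hf.sd1.d2_eq, hf.sd2.d1_eq, e1, e2,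
    fderiv_clm_apply hd (differentiableAt_const _), fderiv_clm_apply hd (differentiableAt_const _)]
  simpa using hs.eq (0, 1) (1, 0)


lemma miura_alg (u u1 u2 u3 u4 k M1 M2 M3 MT : ℝ) (hkk : k ^ 2 = 1) (hW : u + k * u1 ≠ 0)
    (e1 : M1 * (u + k * u1) = u1 * (u + k * u1) + u * (u1 + k * u2))
    (e2 : M2 * (u + k * u1) ^ 2 + M1 * (u1 + k * u2)
      = u2 * (u + k * u1) + 2 * u1 * (u1 + k * u2) + u * (u2 + k * u3))
    (e3 : M3 * (u + k * u1) ^ 3 + 3 * M2 * (u + k * u1) * (u1 + k * u2) + M1 * (u2 + k * u3)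
      = u3 * (u + k * u1) + 3 * u2 * (u1 + k * u2) + 3 * u1 * (u2 + k * u3)
        + u * (u3 + k * u4))
    (ET : M1 * (u ^ 4 - u ^ 3 * u2 + k * (4 * u ^ 3 * u1 - (3 * u ^ 2 * u1 * u2 + u ^ 3 * u3))) + MT
      = (4 * u ^ 3 * u1 - (3 * u ^ 2 * u1 * u2 + u ^ 3 * u3)) * (u + k * u1)
        + u * ((4 * u ^ 3 * u1 - (3 * u ^ 2 * u1 * u2 + u ^ 3 * u3))
          + k * (12 * u ^ 2 * u1 ^ 2 + 4 * u ^ 3 * u2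
            - (6 * u * u1 ^ 2 * u2 + 3 * u ^ 2 * u2 ^ 2 + 6 * u ^ 2 * u1 * u3 + u ^ 3 * u4)))) :
    MT + (3 * (u * (u + k * u1)) ^ 2 * M1 * (M2 - 1) + (u * (u + k * u1)) ^ 3 * M3) = 0 := by
  -- everything in terms of `w = u + k u1`
  obtain ⟨w, hw⟩ : ∃ w, w = u + k * u1 := ⟨_, rfl⟩
  rw [← hw] at hW e1 e2 e3 ET
  rw [← hw]
  have h1 : u1 = k * (w - u) := by rw [hw]; linear_combination (-u1) * hkk
  obtain ⟨w1, hw1⟩ : ∃ w1, w1 = u1 + k * u2 := ⟨_, rfl⟩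
  have h2 : u2 = k * (w1 - u1) := by rw [hw1]; linear_combination (-u2) * hkk
  obtain ⟨w2, hw2⟩ : ∃ w2, w2 = u2 + k * u3 := ⟨_, rfl⟩
  have h3 : u3 = k * (w2 - u2) := by rw [hw2]; linear_combination (-u3) * hkk
  obtain ⟨w3, hw3⟩ : ∃ w3, w3 = u3 + k * u4 := ⟨_, rfl⟩
  have h4 : u4 = k * (w3 - u3) := by rw [hw3]; linear_combination (-u4) * hkk
  rw [← hw1] at e1
  rw [← hw1, ← hw2] at e2
  rw [← hw1, ← hw2, ← hw3] at e3
  have g1 : M1 = (u1 * w + u * w1) / w := by field_simp; linear_combination e1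
  have g2 : M2 = (u2 * w + 2 * u1 * w1 + u * w2 - M1 * w1) / w ^ 2 := by
    field_simp; linear_combination e2
  have g3 : M3 = (u3 * w + 3 * u2 * w1 + 3 * u1 * w2 + u * w3 - 3 * M2 * w * w1 - M1 * w2)
      / w ^ 3 := by
    field_simp; linear_combination e3
  have gT := eq_sub_of_add_eq' ET
  clear e1 e2 e3 ET hw hw1 hw2 hw3
  have hk : k = 1 ∨ k = -1 := by
    have : (k - 1) * (k + 1) = 0 := by linear_combination hkk
    rcases mul_eq_zero.mp this with h | h
    · left; linarith
    · right; linarith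
  rw [gT, g3, g2, g1, h4, h3, h2, h1]
  rcases hk with rfl | rfl
  · field_simp
    ring
  · field_simp
    ring

/-- Theorem 1 of the paper: the Miura-reciprocal transformation
`M = U(U + kU_z)`, `dy = (U + kU_z)dz + [(U⁴ − U³U_zz) + k(U⁴ − U³U_zz)_z]dτ`, `T = τ`
maps a solution `U` of RmKdV to a solution `M` of RKdV. -/
theorem miura_reciprocal_RmKdV_to_RKdV (U y M : ℝ → ℝ → ℝ) (k : ℝ)
    (hU : Smooth2 U) (hy : Smooth2 y) (hM : Smooth2 M)
    (hk : k = 1 ∨ k = -1)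
    (hUne : ∀ z τ, U z τ ≠ 0)
    (hUkne : ∀ z τ, U z τ + k * d1 U z τ ≠ 0)
    (hRmKdV : ∀ z τ, d2 U z τ
      + d1 (fun z τ => (U z τ) ^ 3 * (d1 (d1 U) z τ - U z τ)) z τ = 0)
    (hyz : ∀ z τ, d1 y z τ = U z τ + k * d1 U z τ)
    (hyτ : ∀ z τ, d2 y z τ =
      ((U z τ) ^ 4 - (U z τ) ^ 3 * d1 (d1 U) z τ)
        + k * d1 (fun a b => (U a b) ^ 4 - (U a b) ^ 3 * d1 (d1 U) a b) z τ)
    (hMU : ∀ z τ, M (y z τ) τ = U z τ * (U z τ + k * d1 U z τ)) :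
    ∀ z τ,
      d2 M (y z τ) τ
        + d1 (fun a b => (M a b) ^ 3 * (d1 (d1 M) a b - 1)) (y z τ) τ = 0 := by
  have s1 := hU.sd1
  have s2 := s1.sd1
  have s3 := s2.sd1
  have m1 := hM.sd1
  have m2 := m1.sd1
  have hkk : k ^ 2 = 1 := by rcases hk with h | h <;> rw [h] <;> norm_num
  -- derivatives of the flux
  have dP : ∀ z τ, d1 (fun a b => (U a b) ^ 4 - (U a b) ^ 3 * d1 (d1 U) a b) z τ
      = 4 * U z τ ^ 3 * d1 U z τ - (3 * U z τ ^ 2 * d1 U z τ * d1 (d1 U) z τ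
        + U z τ ^ 3 * d1 (d1 (d1 U)) z τ) := by
    intro z τ
    refine (HasDerivAt.deriv ((((hU.h1 z τ).fun_pow 4).fun_sub
      (((hU.h1 z τ).fun_pow 3).fun_mul (s2.h1 z τ))))).trans ?_
    push_cast; ring
  have Ut : ∀ z τ, d2 U z τ = 4 * U z τ ^ 3 * d1 U z τ
      - (3 * U z τ ^ 2 * d1 U z τ * d1 (d1 U) z τ + U z τ ^ 3 * d1 (d1 (d1 U)) z τ) := by
    intro z τ
    have h := hRmKdV z τ
    have e : d1 (fun z τ => (U z τ) ^ 3 * (d1 (d1 U) z τ - U z τ)) z τ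
      = 3 * U z τ ^ 2 * d1 U z τ * (d1 (d1 U) z τ - U z τ)
        + U z τ ^ 3 * (d1 (d1 (d1 U)) z τ - d1 U z τ) := by
      refine (HasDerivAt.deriv (((hU.h1 z τ).fun_pow 3).fun_mul
        ((s2.h1 z τ).fun_sub (hU.h1 z τ)))).trans ?_
      push_cast; ring
    rw [e] at h
    linear_combination h
  have Uzt : ∀ z τ, d2 (d1 U) z τ = 12 * U z τ ^ 2 * d1 U z τ ^ 2
      + 4 * U z τ ^ 3 * d1 (d1 U) z τ
      - (6 * U z τ * d1 U z τ ^ 2 * d1 (d1 U) z τ + 3 * U z τ ^ 2 * d1 (d1 U) z τ ^ 2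
        + 6 * U z τ ^ 2 * d1 U z τ * d1 (d1 (d1 U)) z τ
        + U z τ ^ 3 * d1 (d1 (d1 (d1 U))) z τ) := by
    intro z τ
    rw [hU.symm]
    have e : d2 U = fun z τ => 4 * U z τ ^ 3 * d1 U z τ
      - (3 * U z τ ^ 2 * d1 U z τ * d1 (d1 U) z τ + U z τ ^ 3 * d1 (d1 (d1 U)) z τ) := by
      funext z τ; exact Ut z τ
    rw [e]
    have a0 := hU.h1 z τ
    have a1 := s1.h1 z τ
    have a2 := s2.h1 z τ
    have a3 := s3.h1 z τ
    refine (HasDerivAt.deriv ((((a0.fun_pow 3).const_mul 4).fun_mul a1).fun_sub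
      (((((a0.fun_pow 2).const_mul 3).fun_mul a1).fun_mul a2).fun_add
        ((a0.fun_pow 3).fun_mul a3)))).trans ?_
    push_cast; ring
  -- derivatives of functions of `(y, τ)` along `z`
  have ch : ∀ F : ℝ → ℝ → ℝ, Smooth2 F → ∀ z τ,
      HasDerivAt (fun s => F (y s τ) τ) (d1 F (y z τ) τ * (U z τ + k * d1 U z τ)) z := by
    intro F hF z τ
    have := hF.chain (hy.h1 z τ) (hasDerivAt_const z τ)
    rw [hyz] at this
    simpa using this
  have E1 : ∀ z τ, d1 M (y z τ) τ * (U z τ + k * d1 U z τ)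
      = d1 U z τ * (U z τ + k * d1 U z τ) + U z τ * (d1 U z τ + k * d1 (d1 U) z τ) := by
    intro z τ
    have a0 := hU.h1 z τ
    have a1 := s1.h1 z τ
    have h := ch M hM z τ
    simp only [hMU] at h
    exact h.unique (a0.fun_mul (a0.fun_add (a1.const_mul k)))
  have E2 : ∀ z τ, d1 (d1 M) (y z τ) τ * (U z τ + k * d1 U z τ) ^ 2
      + d1 M (y z τ) τ * (d1 U z τ + k * d1 (d1 U) z τ)
      = d1 (d1 U) z τ * (U z τ + k * d1 U z τ) + 2 * d1 U z τ * (d1 U z τ + k * d1 (d1 U) z τ)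
        + U z τ * (d1 (d1 U) z τ + k * d1 (d1 (d1 U)) z τ) := by
    intro z τ
    have a0 := hU.h1 z τ
    have a1 := s1.h1 z τ
    have a2 := s2.h1 z τ
    have h := (ch _ m1 z τ).fun_mul (a0.fun_add (a1.const_mul k))
    simp only [E1] at h
    have := h.unique ((a1.fun_mul (a0.fun_add (a1.const_mul k))).fun_add
      (a0.fun_mul (a1.fun_add (a2.const_mul k))))
    linear_combination this
  have E3 : ∀ z τ, d1 (d1 (d1 M)) (y z τ) τ * (U z τ + k * d1 U z τ) ^ 3
      + 3 * d1 (d1 M) (y z τ) τ * (U z τ + k * d1 U z τ) * (d1 U z τ + k * d1 (d1 U) z τ)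
      + d1 M (y z τ) τ * (d1 (d1 U) z τ + k * d1 (d1 (d1 U)) z τ)
      = d1 (d1 (d1 U)) z τ * (U z τ + k * d1 U z τ)
        + 3 * d1 (d1 U) z τ * (d1 U z τ + k * d1 (d1 U) z τ)
        + 3 * d1 U z τ * (d1 (d1 U) z τ + k * d1 (d1 (d1 U)) z τ)
        + U z τ * (d1 (d1 (d1 U)) z τ + k * d1 (d1 (d1 (d1 U))) z τ) := by
    intro z τ
    have a0 := hU.h1 z τ
    have a1 := s1.h1 z τ
    have a2 := s2.h1 z τ
    have a3 := s3.h1 z τ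
    have w0 := a0.fun_add (a1.const_mul k)
    have w1 := a1.fun_add (a2.const_mul k)
    have w2 := a2.fun_add (a3.const_mul k)
    have h := ((ch _ m2 z τ).fun_mul (w0.fun_pow 2)).fun_add ((ch _ m1 z τ).fun_mul w1)
    simp only [E2] at h
    have := h.unique (((a2.fun_mul w0).fun_add ((a1.const_mul 2).fun_mul w1)).fun_add
      (a0.fun_mul w2))
    push_cast at this
    linear_combination this
  intro z τ
  have ET : d1 M (y z τ) τ * d2 y z τ + d2 M (y z τ) τ
      = d2 U z τ * (U z τ + k * d1 U z τ) + U z τ * (d2 U z τ + k * d2 (d1 U) z τ) := by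
    have h := hM.chain (hy.h2 z τ) (hasDerivAt_id τ)
    simp only [id, hMU, mul_one] at h
    have b0 := hU.h2 z τ
    have b1 := s1.h2 z τ
    exact h.unique (b0.fun_mul (b0.fun_add (b1.const_mul k)))
  have EG : d1 (fun a b => (M a b) ^ 3 * (d1 (d1 M) a b - 1)) (y z τ) τ
      = 3 * M (y z τ) τ ^ 2 * d1 M (y z τ) τ * (d1 (d1 M) (y z τ) τ - 1)
        + M (y z τ) τ ^ 3 * d1 (d1 (d1 M)) (y z τ) τ := by
    refine (HasDerivAt.deriv (((hM.h1 (y z τ) τ).fun_pow 3).fun_mul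
      ((m2.h1 (y z τ) τ).sub_const 1))).trans ?_
    push_cast; ring
  rw [EG, hMU]
  rw [hyτ, dP, Uzt, Ut] at ET
  have e1 := E1 z τ
  have e2 := E2 z τ
  have e3 := E3 z τ
  have hW := hUkne z τ
  generalize d2 M (y z τ) τ = MT at *
  generalize d1 (d1 (d1 M)) (y z τ) τ = M3 at *
  generalize d1 (d1 M) (y z τ) τ = M2 at *
  generalize d1 M (y z τ) τ = M1 at *
  generalize d1 (d1 (d1 (d1 U))) z τ = u4 at *
  generalize d1 (d1 (d1 U)) z τ = u3 at *
  generalize d1 (d1 U) z τ = u2 at *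
  generalize d1 U z τ = u1 at *
  generalize U z τ = u at *
  exact miura_alg u u1 u2 u3 u4 k M1 M2 M3 MT hkk hW e1 e2 e3 ET
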